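/- Fix a ∈ (0,1) and let r_n := √(n/(2a(1−a))). Let ψ : [0,1] → [0,∞) be continuous with ψ(a) > 0. Then for all −∞ ≤ x₁ < x₂ ≤ +∞, (∫ over (a + x₁/r_n, a + x₂/r_n) ∩ [0,1] of ψ(x) x^{a n}(1−x)^{(1−a)n} dx) / (∫_0^1 ψ(x) x^{a n}(1−x)^{(1−a)n} dx) converges to (1/√π) ∫_{x₁}^{x₂} e^{−u²} du as n → ∞ (the exponents a n and (1−a)n being real). -/

import Mathlib

open MeasureTheory Filter Real

open Set Topology

/-!
Per trial, the binomial likelihood at `x` loses the factor `exp (-KL(a ‖ x))` against its maximum,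
which is attained at the observed frequency `a`. The divergence `KL(a ‖ x)` is bounded below by
`2 * (x - a) ^ 2` (Pinsker) and asymptotic to `(x - a) ^ 2 / (2 * a * (1 - a))` at `a`. In the
variable `u = r * (x - a)` the normalised likelihood therefore tends to `exp (-u ^ 2)` under a
Gaussian bound (Laplace's method), while the prior contributes only its value at `a`, which cancels
in the posterior. Away from `a` the prior need not be bounded: there the likelihood decays like
`exp (-ε * r ^ 2)` uniformly, against the Jacobian factor `r`.
-/

section Laplace

variable {E : Type*} [NormedAddCommGroup E] [NormedSpace ℝ E]

lemma integrableOn_exp_neg_smul {α : Type*} [MeasurableSpace α] {μ : Measure α} {K : Set α}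
    {D : α → ℝ} {g : α → E} (hK : MeasurableSet K) (hg : IntegrableOn g K μ)
    (hDm : AEStronglyMeasurable D (μ.restrict K)) (hD : ∀ x ∈ K, 0 ≤ D x) :
    IntegrableOn (fun x => exp (-D x) • g x) K μ := by
  refine hg.bdd_smul 1 (continuous_exp.comp_aestronglyMeasurable hDm.neg) ?_
  filter_upwards [ae_restrict_mem hK] with x hx
  simpa using hD x hx

lemma setIntegral_comp_add_div (f : ℝ → E) (a : ℝ) {S : Set ℝ} (hS : MeasurableSet S) {r : ℝ}
    (hr : 0 < r) :
    ∫ u in S, f (a + u / r) = r • ∫ x in {x | r * (x - a) ∈ S}, f x := by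
  have hS' : MeasurableSet {x | r * (x - a) ∈ S} :=
    (by fun_prop : Measurable fun x : ℝ => r * (x - a)) hS
  have hpre : (fun u => a + u / r) ⁻¹' {x | r * (x - a) ∈ S} = S := by
    ext u
    have : r * (a + u / r - a) = u := by field_simp; ring
    rw [mem_preimage, mem_ofPred_eq, this]
  calc ∫ u in S, f (a + u / r)
      = ∫ u, {x | r * (x - a) ∈ S}.indicator f (a + u / r) := by
        simp_rw [← indicator_comp_right (fun u => a + u / r), hpre]
        exact (integral_indicator hS).symm
    _ = r • ∫ x in {x | r * (x - a) ∈ S}, f x := by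
        rw [Measure.integral_comp_div (fun x => {x | r * (x - a) ∈ S}.indicator f (a + x)),
          integral_add_left_eq_self, abs_of_pos hr, integral_indicator hS']

lemma tendsto_smul_setIntegral_of_dominated {F : ℝ → ℝ → E} {f : ℝ → E} {bound : ℝ → ℝ} (a : ℝ)
    {S : Set ℝ} (hS : MeasurableSet S) (hF_int : ∀ r, Integrable (F r))
    (hbound_int : Integrable bound) (hF_bound : ∀ r > 0, ∀ u, ‖F r (a + u / r)‖ ≤ bound u)
    (hF_lim : ∀ᵐ u, Tendsto (fun r => F r (a + u / r)) atTop (𝓝 (f u))) :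
    Tendsto (fun r : ℝ => r • ∫ x in {x | r * (x - a) ∈ S}, F r x) atTop (𝓝 (∫ u in S, f u)) := by
  have hF_meas {r : ℝ} (hr : 0 < r) : AEStronglyMeasurable fun u => F r (a + u / r) :=
    (((hF_int r).comp_add_left a).comp_div hr.ne').aestronglyMeasurable
  have hlim : Tendsto (fun r => ∫ u in S, F r (a + u / r)) atTop (𝓝 (∫ u in S, f u)) := by
    refine tendsto_integral_filter_of_dominated_convergence bound ?_ ?_ hbound_int.integrableOn
      (ae_restrict_of_ae hF_lim)
    · filter_upwards [eventually_gt_atTop 0] with r hr using (hF_meas hr).restrict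
    · filter_upwards [eventually_gt_atTop 0] with r hr using .of_forall (hF_bound r hr)
  refine hlim.congr' ?_
  filter_upwards [eventually_gt_atTop 0] with r hr using setIntegral_comp_add_div _ a hS hr

lemma tendsto_add_div_atTop (a u : ℝ) : Tendsto (fun r : ℝ => a + u / r) atTop (𝓝 a) := by
  simpa using (tendsto_id.const_div_atTop u).const_add a

lemma tendsto_sq_mul_comp_add_div {D : ℝ → ℝ} {a k u : ℝ}
    (hD : Tendsto (fun x => D x / (x - a) ^ 2) (𝓝[≠] a) (𝓝 k)) (hu : u ≠ 0) :
    Tendsto (fun r => r ^ 2 * D (a + u / r)) atTop (𝓝 (k * u ^ 2)) := by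
  have hpunctured : Tendsto (fun r : ℝ => a + u / r) atTop (𝓝[≠] a) := by
    refine tendsto_nhdsWithin_iff.2 ⟨tendsto_add_div_atTop a u, ?_⟩
    filter_upwards [eventually_ne_atTop 0] with r hr
    simp [hu, hr]
  refine ((hD.comp hpunctured).mul_const (u ^ 2)).congr' ?_
  filter_upwards [eventually_ne_atTop 0] with r hr
  simp only [Function.comp_apply, add_sub_cancel_left]
  field_simp

lemma exp_neg_sq_mul_comp_add_div_le {D : ℝ → ℝ} {a c r u : ℝ} (hr : r ≠ 0)
    (hD : c * (a + u / r - a) ^ 2 ≤ D (a + u / r)) :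
    exp (-(r ^ 2 * D (a + u / r))) ≤ exp (-c * u ^ 2) := by
  refine exp_le_exp.2 ?_
  calc -(r ^ 2 * D (a + u / r)) ≤ -(r ^ 2 * (c * (a + u / r - a) ^ 2)) := by gcongr
    _ = -c * u ^ 2 := by field_simp; ring

lemma tendsto_smul_setIntegral_exp_neg_sq_mul_smul_of_norm_le [CompleteSpace E]
    {S K : Set ℝ} {D : ℝ → ℝ} {g : ℝ → E} {a c k M : ℝ}
    (hS : MeasurableSet S) (hK : MeasurableSet K) (haK : K ∈ 𝓝 a)
    (hg : IntegrableOn g K) (hgM : ∀ x ∈ K, ‖g x‖ ≤ M) (hga : ContinuousAt g a)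
    (hDm : AEStronglyMeasurable D (volume.restrict K)) (hc : 0 < c)
    (hcD : ∀ x ∈ K, c * (x - a) ^ 2 ≤ D x)
    (hDa : Tendsto (fun x => D x / (x - a) ^ 2) (𝓝[≠] a) (𝓝 k)) :
    Tendsto (fun r : ℝ => r • ∫ x in {x | r * (x - a) ∈ S} ∩ K, exp (-(r ^ 2 * D x)) • g x)
      atTop (𝓝 ((∫ u in S, exp (-(k * u ^ 2))) • g a)) := by
  set F : ℝ → ℝ → E := fun r => K.indicator fun x => exp (-(r ^ 2 * D x)) • g x
  have hM : 0 ≤ M := (norm_nonneg _).trans (hgM a (mem_of_mem_nhds haK))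
  have hD_nonneg : ∀ x ∈ K, 0 ≤ D x := fun x hx =>
    (by positivity : 0 ≤ c * (x - a) ^ 2).trans (hcD x hx)
  have hF_int (r : ℝ) : Integrable (F r) := (integrable_indicator_iff hK).2 <|
    integrableOn_exp_neg_smul hK hg (hDm.const_mul (r ^ 2)) fun x hx =>
      mul_nonneg (sq_nonneg r) (hD_nonneg x hx)
  have hF_bound (r : ℝ) (hr : r > 0) (u : ℝ) : ‖F r (a + u / r)‖ ≤ M * exp (-c * u ^ 2) := by
    by_cases hx : a + u / r ∈ K
    · simp only [F, indicator_of_mem hx, norm_smul, norm_of_nonneg (exp_pos _).le]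
      rw [mul_comm]
      exact mul_le_mul (hgM _ hx) (exp_neg_sq_mul_comp_add_div_le hr.ne' (hcD _ hx))
        (exp_pos _).le hM
    · simp only [F, indicator_of_notMem hx, norm_zero]
      positivity
  have hF_lim {u : ℝ} (hu : u ≠ 0) :
      Tendsto (fun r => F r (a + u / r)) atTop (𝓝 (exp (-(k * u ^ 2)) • g a)) := by
    have hx := tendsto_add_div_atTop a u
    refine ((tendsto_sq_mul_comp_add_div hDa hu).neg.rexp.smul (hga.tendsto.comp hx)).congr' ?_
    filter_upwards [hx haK] with r hr
    simp only [F, indicator_of_mem (mem_preimage.1 hr), Function.comp_apply]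
  have hlim := tendsto_smul_setIntegral_of_dominated a hS hF_int
    ((integrable_exp_neg_mul_sq hc).const_mul M) hF_bound
    ((Measure.ae_ne volume 0).mono fun u => hF_lim)
  simpa only [F, setIntegral_indicator hK, integral_smul_const] using hlim

lemma tendsto_mul_exp_neg_mul_sq_atTop {ε : ℝ} (hε : 0 < ε) :
    Tendsto (fun r : ℝ => r * exp (-ε * r ^ 2)) atTop (𝓝 0) := by
  simpa using (rpow_mul_exp_neg_mul_sq_isLittleO_exp_neg hε 1).tendsto_zero_of_tendsto
    (tendsto_exp_atBot.comp <| tendsto_id.const_mul_atTop_of_neg (by norm_num))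

lemma tendsto_smul_setIntegral_exp_neg_sq_mul_smul_zero {α : Type*} [MeasurableSpace α]
    {μ : Measure α} {K : Set α} {D : α → ℝ} {g : α → E} {ε : ℝ} (hK : MeasurableSet K)
    (hg : IntegrableOn g K μ) (hε : 0 < ε) (hD : ∀ x ∈ K, ε ≤ D x) (T : ℝ → Set α) :
    Tendsto (fun r : ℝ => r • ∫ x in T r ∩ K, exp (-(r ^ 2 * D x)) • g x ∂μ) atTop (𝓝 0) := by
  have hlim : Tendsto (fun r : ℝ => r * exp (-ε * r ^ 2) * ∫ x in K, ‖g x‖ ∂μ) atTop (𝓝 0) := by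
    simpa using (tendsto_mul_exp_neg_mul_sq_atTop hε).mul_const _
  refine squeeze_zero_norm' ?_ hlim
  filter_upwards [eventually_ge_atTop 0] with r hr
  have hbound : ∀ x ∈ K, ‖exp (-(r ^ 2 * D x)) • g x‖ ≤ exp (-ε * r ^ 2) * ‖g x‖ := by
    intro x hx
    rw [norm_smul, norm_of_nonneg (exp_pos _).le]
    gcongr
    nlinarith [hD x hx, sq_nonneg r]
  calc ‖r • ∫ x in T r ∩ K, exp (-(r ^ 2 * D x)) • g x ∂μ‖
      = r * ‖∫ x in T r ∩ K, exp (-(r ^ 2 * D x)) • g x ∂μ‖ := by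
        rw [norm_smul, norm_of_nonneg hr]
    _ ≤ r * ∫ x in T r ∩ K, exp (-ε * r ^ 2) * ‖g x‖ ∂μ := by
        gcongr
        exact norm_integral_le_of_norm_le
          (IntegrableOn.mono_set (hg.norm.const_mul _) inter_subset_right)
          (ae_restrict_of_ae_restrict_of_subset inter_subset_right
            (ae_restrict_of_forall_mem hK hbound))
    _ ≤ r * ∫ x in K, exp (-ε * r ^ 2) * ‖g x‖ ∂μ := by
        refine mul_le_mul_of_nonneg_left ?_ hr
        exact setIntegral_mono_set (hg.norm.const_mul _) (.of_forall fun x => by positivity)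
          inter_subset_right.eventuallyLE
    _ = r * exp (-ε * r ^ 2) * ∫ x in K, ‖g x‖ ∂μ := by
        rw [integral_const_mul, mul_assoc]

theorem tendsto_smul_setIntegral_exp_neg_sq_mul_smul [CompleteSpace E]
    {S K : Set ℝ} {D : ℝ → ℝ} {g : ℝ → E} {a c k : ℝ}
    (hS : MeasurableSet S) (hK : MeasurableSet K) (haK : K ∈ 𝓝 a)
    (hg : IntegrableOn g K) (hga : ContinuousAt g a)
    (hDm : AEStronglyMeasurable D (volume.restrict K)) (hc : 0 < c)
    (hcD : ∀ x ∈ K, c * (x - a) ^ 2 ≤ D x)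
    (hDa : Tendsto (fun x => D x / (x - a) ^ 2) (𝓝[≠] a) (𝓝 k)) :
    Tendsto (fun r : ℝ => r • ∫ x in {x | r * (x - a) ∈ S} ∩ K, exp (-(r ^ 2 * D x)) • g x)
      atTop (𝓝 ((∫ u in S, exp (-(k * u ^ 2))) • g a)) := by
  obtain ⟨δ, hδ, hgδ⟩ : ∃ δ > 0, ∀ x ∈ Metric.ball a δ, ‖g x‖ < ‖g a‖ + 1 :=
    Metric.eventually_nhds_iff_ball.1 (hga.norm.eventually_lt_const (lt_add_one _))
  set B := Metric.ball a δ
  have hB : MeasurableSet B := measurableSet_ball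
  have hnear := tendsto_smul_setIntegral_exp_neg_sq_mul_smul_of_norm_le hS (hK.inter hB)
    (inter_mem haK (Metric.ball_mem_nhds a hδ)) (hg.mono_set inter_subset_left)
    (fun x hx => (hgδ x hx.2).le) hga (hDm.mono_set inter_subset_left) hc
    (fun x hx => hcD x hx.1) hDa
  have hD_far : ∀ x ∈ K \ B, c * δ ^ 2 ≤ D x := fun x hx => by
    have hδx : δ ≤ |x - a| := not_lt.1 hx.2
    refine le_trans ?_ (hcD x hx.1)
    rw [← sq_abs (x - a)]
    gcongr
  have hfar := tendsto_smul_setIntegral_exp_neg_sq_mul_smul_zero (hK.diff hB)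
    (hg.mono_set sdiff_subset) (by positivity) hD_far fun r => {x | r * (x - a) ∈ S}
  have hsum := hnear.add hfar
  rw [add_zero] at hsum
  refine hsum.congr fun r => ?_
  have hD_nonneg : ∀ x ∈ K, 0 ≤ D x := fun x hx =>
    (by positivity : 0 ≤ c * (x - a) ^ 2).trans (hcD x hx)
  have hint : IntegrableOn (fun x => exp (-(r ^ 2 * D x)) • g x) K :=
    integrableOn_exp_neg_smul hK hg (hDm.const_mul (r ^ 2)) fun x hx =>
      mul_nonneg (sq_nonneg r) (hD_nonneg x hx)
  rw [← smul_add, ← inter_assoc, ← inter_sdiff_assoc,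
    integral_inter_add_sdiff hB (hint.mono_set inter_subset_right)]

end Laplace

/-- The Kullback–Leibler divergence `KL(a ‖ x)` between the Bernoulli distributions with parameters
`a` and `x`, the exponential rate at which the binomial likelihood decays. It has this meaning only
for `a` and `x` in `(0, 1)`: the infinite values at `x = 0` and `x = 1` are not represented. -/
noncomputable def bernoulliKL (a x : ℝ) : ℝ :=
  a * log (a / x) + (1 - a) * log ((1 - a) / (1 - x))

section BernoulliKL

variable {a x : ℝ}

lemma measurable_bernoulliKL (a : ℝ) : Measurable (bernoulliKL a) := by
  unfold bernoulliKL
  fun_prop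

lemma bernoulliKL_self (a : ℝ) : bernoulliKL a a = 0 := by
  simp only [bernoulliKL, log_div_self, mul_zero, add_zero]

lemma hasDerivAt_bernoulliKL (ha : a ∈ Ioo 0 1) (hx : x ∈ Ioo 0 1) :
    HasDerivAt (bernoulliKL a) ((x - a) / (x * (1 - x))) x := by
  obtain ⟨ha₀, ha₁⟩ := ha
  obtain ⟨hx₀, hx₁⟩ := hx
  have ha₁' : 1 - a ≠ 0 := by linarith
  have hx₁' : 1 - x ≠ 0 := by linarith
  have hleft := (((hasDerivAt_const x a).div (hasDerivAt_id x) hx₀.ne').log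
    (div_ne_zero ha₀.ne' hx₀.ne')).const_mul a
  have hright := (((hasDerivAt_const x (1 - a)).div ((hasDerivAt_id x).const_sub 1) hx₁').log
    (div_ne_zero ha₁' hx₁')).const_mul (1 - a)
  refine (hleft.add hright).congr_deriv ?_
  simp only [id, Pi.div_apply]
  field_simp
  ring

lemma two_mul_sq_le_bernoulliKL (ha : a ∈ Ioo 0 1) (hx : x ∈ Ioo 0 1) :
    2 * (x - a) ^ 2 ≤ bernoulliKL a x := by
  have hderiv {y : ℝ} (hy : y ∈ Ioo 0 1) : HasDerivAt
      (fun z => bernoulliKL a z - 2 * (z - a) ^ 2) ((y - a) * (1 / (y * (1 - y)) - 4)) y := by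
    refine ((hasDerivAt_bernoulliKL ha hy).sub
      ((((hasDerivAt_id y).sub_const a).pow 2).const_mul 2)).congr_deriv ?_
    simp only [id]
    ring
  have hfactor {y : ℝ} (hy : y ∈ Ioo 0 1) : 0 ≤ 1 / (y * (1 - y)) - 4 := by
    have : 0 < y * (1 - y) := mul_pos hy.1 (sub_pos.2 hy.2)
    rw [sub_nonneg, le_div_iff₀ this]
    nlinarith [sq_nonneg (2 * y - 1)]
  have hleft : Ioo 0 a ⊆ Ioo 0 1 := Ioo_subset_Ioo_right ha.2.le
  have hright : Ioo a 1 ⊆ Ioo 0 1 := Ioo_subset_Ioo_left ha.1.le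
  have hmin : IsMinOn (fun z => bernoulliKL a z - 2 * (z - a) ^ 2) (Ioo 0 1) a := by
    refine isMinOn_Ioo_of_deriv (hderiv ha).continuousAt
      (fun y hy => (hderiv (hleft hy)).differentiableAt.differentiableWithinAt)
      (fun y hy => (hderiv (hright hy)).differentiableAt.differentiableWithinAt)
      (fun y hy => ?_) (fun y hy => ?_)
    · rw [(hderiv (hleft hy)).deriv]
      exact mul_nonpos_of_nonpos_of_nonneg (sub_nonpos.2 hy.2.le) (hfactor (hleft hy))
    · rw [(hderiv (hright hy)).deriv]
      exact mul_nonneg (sub_nonneg.2 hy.1.le) (hfactor (hright hy))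
  simpa [bernoulliKL_self] using isMinOn_iff.1 hmin x hx

lemma two_mul_mul_one_sub_pos (ha : a ∈ Ioo 0 1) : 0 < 2 * a * (1 - a) :=
  mul_pos (mul_pos two_pos ha.1) (sub_pos.2 ha.2)

lemma tendsto_bernoulliKL_div_sq (ha : a ∈ Ioo 0 1) :
    Tendsto (fun x => bernoulliKL a x / (x - a) ^ 2) (𝓝[≠] a) (𝓝 (1 / (2 * a * (1 - a)))) := by
  have hnhds : ∀ᶠ x in 𝓝[≠] a, x ∈ Ioo (0 : ℝ) 1 :=
    eventually_nhdsWithin_of_eventually_nhds (isOpen_Ioo.mem_nhds ha)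
  have hsq (x : ℝ) : HasDerivAt (fun y => (y - a) ^ 2) (2 * (x - a)) x := by
    simpa using ((hasDerivAt_id x).sub_const a).fun_pow 2
  have hne : ∀ᶠ x in 𝓝[≠] a, x - a ≠ 0 :=
    eventually_mem_nhdsWithin.mono fun x hx => sub_ne_zero.2 hx
  have hKL_zero : Tendsto (bernoulliKL a) (𝓝[≠] a) (𝓝 0) := by
    simpa [bernoulliKL_self] using
      (hasDerivAt_bernoulliKL ha ha).continuousAt.tendsto.mono_left nhdsWithin_le_nhds
  have hsq_zero : Tendsto (fun x => (x - a) ^ 2) (𝓝[≠] a) (𝓝 0) := by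
    simpa using (hsq a).continuousAt.tendsto.mono_left nhdsWithin_le_nhds
  refine HasDerivAt.lhopital_zero_nhdsNE (hnhds.mono fun x hx => hasDerivAt_bernoulliKL ha hx)
    (.of_forall hsq) (hne.mono fun x hx => mul_ne_zero two_ne_zero hx) hKL_zero hsq_zero ?_
  have hratio : Tendsto (fun x : ℝ => 1 / (2 * x * (1 - x))) (𝓝[≠] a)
      (𝓝 (1 / (2 * a * (1 - a)))) := by
    have : 2 * a * (1 - a) ≠ 0 := (two_mul_mul_one_sub_pos ha).ne'
    have hcont : ContinuousAt (fun x : ℝ => 1 / (2 * x * (1 - x))) a := by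
      fun_prop (disch := exact this)
    exact hcont.tendsto.mono_left nhdsWithin_le_nhds
  refine hratio.congr' ?_
  filter_upwards [hne, hnhds] with x hx hx01
  have : 1 - x ≠ 0 := (sub_pos.2 hx01.2).ne'
  have : x ≠ 0 := hx01.1.ne'
  field_simp

end BernoulliKL

/-- The binomial likelihood of the success probability `x` after `t` trials with relative frequency
`a` of successes, up to the binomial coefficient; the number `t` of trials may be any real. -/
noncomputable def binomialLikelihood (a t x : ℝ) : ℝ :=
  x ^ (a * t) * (1 - x) ^ ((1 - a) * t)

section BinomialLikelihood

variable {a : ℝ}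

lemma binomialLikelihood_self_pos (ha : a ∈ Ioo 0 1) (t : ℝ) : 0 < binomialLikelihood a t a :=
  mul_pos (rpow_pos_of_pos ha.1 _) (rpow_pos_of_pos (sub_pos.2 ha.2) _)

lemma binomialLikelihood_eq_mul_exp {x : ℝ} (ha : a ∈ Ioo 0 1) (hx : x ∈ Ioo 0 1) (t : ℝ) :
    binomialLikelihood a t x = binomialLikelihood a t a * exp (-(t * bernoulliKL a x)) := by
  have ha₁ : 0 < 1 - a := sub_pos.2 ha.2
  have hx₁ : 0 < 1 - x := sub_pos.2 hx.2
  simp only [binomialLikelihood, bernoulliKL, rpow_def_of_pos ha.1, rpow_def_of_pos hx.1,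
    rpow_def_of_pos ha₁, rpow_def_of_pos hx₁, log_div ha.1.ne' hx.1.ne',
    log_div ha₁.ne' hx₁.ne', ← exp_add]
  ring_nf

theorem tendsto_mul_setIntegral_mul_binomialLikelihood (ha : a ∈ Ioo 0 1) {ψ : ℝ → ℝ}
    (hψ : IntegrableOn ψ (Icc 0 1)) (hψa : ContinuousAt ψ a) {S : Set ℝ} (hS : MeasurableSet S) :
    Tendsto (fun t : ℝ => √(t / (2 * a * (1 - a))) / binomialLikelihood a t a *
        ∫ x in {x | √(t / (2 * a * (1 - a))) * (x - a) ∈ S} ∩ Icc 0 1,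
          ψ x * binomialLikelihood a t x)
      atTop (𝓝 ((∫ u in S, exp (-u ^ 2)) * ψ a)) := by
  set v := 2 * a * (1 - a)
  have hv : 0 < v := two_mul_mul_one_sub_pos ha
  have hr : Tendsto (fun t : ℝ => √(t / v)) atTop atTop :=
    tendsto_sqrt_atTop.comp (tendsto_id.atTop_div_const hv)
  have hlower : ∀ x ∈ Ioo (0 : ℝ) 1, v * 2 * (x - a) ^ 2 ≤ v * bernoulliKL a x := fun x hx => by
    rw [mul_assoc]
    exact mul_le_mul_of_nonneg_left (two_mul_sq_le_bernoulliKL ha hx) hv.le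
  have hquad : Tendsto (fun x => v * bernoulliKL a x / (x - a) ^ 2) (𝓝[≠] a) (𝓝 1) := by
    have := (tendsto_bernoulliKL_div_sq ha).const_mul v
    rw [mul_one_div_cancel hv.ne'] at this
    simpa only [mul_div_assoc] using this
  have hlaplace := (tendsto_smul_setIntegral_exp_neg_sq_mul_smul hS measurableSet_Ioo
    (isOpen_Ioo.mem_nhds ha) (hψ.mono_set Ioo_subset_Icc_self) hψa
    ((measurable_bernoulliKL a).const_mul v).aestronglyMeasurable (by positivity)
    hlower hquad).comp hr
  simp only [one_mul, smul_eq_mul] at hlaplace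
  refine hlaplace.congr' ?_
  filter_upwards [eventually_ge_atTop 0] with t ht
  have hrt : MeasurableSet {x | √(t / v) * (x - a) ∈ S} :=
    (by fun_prop : Measurable fun x => √(t / v) * (x - a)) hS
  have hexp : ∀ x ∈ {x | √(t / v) * (x - a) ∈ S} ∩ Ioo 0 1,
      ψ x * binomialLikelihood a t x = binomialLikelihood a t a *
        (exp (-(√(t / v) ^ 2 * (v * bernoulliKL a x))) * ψ x) := fun x hx => by
    rw [binomialLikelihood_eq_mul_exp ha hx.2, sq_sqrt (by positivity), ← mul_assoc (t / v),
      div_mul_cancel₀ _ hv.ne']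
    ring
  rw [setIntegral_congr_set ((ae_eq_refl _).inter Ioo_ae_eq_Icc.symm),
    setIntegral_congr_fun (hrt.inter measurableSet_Ioo) hexp, integral_const_mul, ← mul_assoc,
    div_mul_cancel₀ _ (binomialLikelihood_self_pos ha t).ne', Function.comp_apply]

end BinomialLikelihood

theorem vonMises_binomial_general_prior_general {a : ℝ} (ha : a ∈ Ioo 0 1) {ψ : ℝ → ℝ}
    (hψ : IntegrableOn ψ (Icc 0 1)) (hψ_cont : ContinuousAt ψ a) (hψ_ne : ψ a ≠ 0)
    {S : Set ℝ} (hS : MeasurableSet S) :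
    Tendsto (fun t : ℝ =>
        (∫ x in {x | √(t / (2 * a * (1 - a))) * (x - a) ∈ S} ∩ Icc 0 1,
          ψ x * binomialLikelihood a t x) /
        (∫ x in (0 : ℝ)..1, ψ x * binomialLikelihood a t x))
      atTop (𝓝 ((1 / √π) * ∫ u in S, exp (-u ^ 2))) := by
  have hnum := tendsto_mul_setIntegral_mul_binomialLikelihood ha hψ hψ_cont hS
  have hden := tendsto_mul_setIntegral_mul_binomialLikelihood ha hψ hψ_cont MeasurableSet.univ
  have hgauss : ∫ u : ℝ, exp (-u ^ 2) = √π := by simpa using integral_gaussian 1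
  rw [setIntegral_univ, hgauss] at hden
  have hratio := hnum.div hden (mul_ne_zero (sqrt_pos.2 pi_pos).ne' hψ_ne)
  rw [mul_div_mul_right _ _ hψ_ne, ← one_div_mul_eq_div (√π)] at hratio
  refine hratio.congr' ?_
  filter_upwards [eventually_gt_atTop 0] with t ht
  have hscale : 0 < √(t / (2 * a * (1 - a))) / binomialLikelihood a t a :=
    div_pos (sqrt_pos.2 (div_pos ht (two_mul_mul_one_sub_pos ha)))
      (binomialLikelihood_self_pos ha t)
  simp only [Pi.div_apply, mem_univ, ofPred_true, univ_inter]
  rw [mul_div_mul_left _ _ hscale.ne', intervalIntegral.integral_of_le zero_le_one,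
    integral_Icc_eq_integral_Ioc]

/-- Von Mises's 1919 Bernstein–von Mises theorem for the binomial model with a
general prior density `ψ` and constant relative frequency `a`: the posterior of
the success probability, centered at `a` and scaled by `r_n = √(n/(2a(1−a)))`,
is asymptotically normal, independently of `ψ`. The integration interval
`(a + x₁/r_n, a + x₂/r_n) ∩ [0,1]` (with possibly infinite endpoints) is
encoded via `{x | x₁ < r_n(x−a) < x₂}` in `EReal`. -/
theorem vonMises_binomial_general_prior (a : ℝ) (ha : a ∈ Set.Ioo (0:ℝ) 1)
    (ψ : ℝ → ℝ) (hψ_cont : ContinuousOn ψ (Set.Icc (0:ℝ) 1))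
    (hψ_nonneg : ∀ x ∈ Set.Icc (0:ℝ) 1, 0 ≤ ψ x) (hψ_pos : 0 < ψ a)
    (x₁ x₂ : EReal) (h12 : x₁ < x₂) :
    Tendsto (fun n : ℕ =>
      (∫ x in {x : ℝ | x₁ < ((Real.sqrt ((n : ℝ) / (2 * a * (1 - a))) * (x - a) : ℝ) : EReal) ∧
                       ((Real.sqrt ((n : ℝ) / (2 * a * (1 - a))) * (x - a) : ℝ) : EReal) < x₂} ∩
              Set.Icc (0:ℝ) 1,
          ψ x * (x ^ (a * (n : ℝ)) * (1 - x) ^ ((1 - a) * (n : ℝ)))) /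
      (∫ x in (0:ℝ)..1, ψ x * (x ^ (a * (n : ℝ)) * (1 - x) ^ ((1 - a) * (n : ℝ)))))
      atTop
      (nhds ((1 / Real.sqrt π) *
        ∫ u in {u : ℝ | x₁ < (u : EReal) ∧ (u : EReal) < x₂}, Real.exp (-u ^ 2))) :=
  (vonMises_binomial_general_prior_general ha hψ_cont.integrableOn_Icc
    (hψ_cont.continuousAt (Icc_mem_nhds ha.1 ha.2)) hψ_pos.ne'
    ((measurableSet_Ioo (a := x₁) (b := x₂)).preimage measurable_coe_real_ereal)).comp
    tendsto_natCast_atTop_atTop
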